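/- For every integer n ≥ 2 and every integer d ≥ 0 there are only finitely many isomorphism classes of d-maximal subsets of [n]^∞; that is, there exist finitely many d-maximal sets T_1, …, T_N ⊆ [n]^∞ such that every d-maximal set S ⊆ [n]^∞ equals σ(T_j) for some j and some isomorphism σ. -/

import Mathlib

/-- Hamming distance between infinite words over `Fin n`, as an extended natural number. -/
noncomputable def hDist (n : ℕ) (a b : ℕ → Fin n) : ℕ∞ := {i | a i ≠ b i}.encard

/-- The `r`-ball around `a`. -/
def hBall (n : ℕ) (a : ℕ → Fin n) (r : ℕ) : Set (ℕ → Fin n) := {x | hDist n x a ≤ (r : ℕ∞)}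

/-- `S` is `d`-maximal: it has diameter `d` and any point within distance `d`
of all of `S` already belongs to `S`. -/
def IsDMaximal (n d : ℕ) (S : Set (ℕ → Fin n)) : Prop :=
  (∀ a ∈ S, ∀ b ∈ S, hDist n a b ≤ (d : ℕ∞)) ∧
  (∃ a ∈ S, ∃ b ∈ S, hDist n a b = (d : ℕ∞)) ∧
  (∀ x : ℕ → Fin n, (∀ s ∈ S, hDist n x s ≤ (d : ℕ∞)) → x ∈ S)

/-- `S` contains an `r`-ball. -/
def ContainsBall (n : ℕ) (S : Set (ℕ → Fin n)) (r : ℕ) : Prop :=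
  ∃ a, hBall n a r ⊆ S

/-- `σ` is an isomorphism of `[n]^∞`: it permutes coordinates and applies a
permutation of the alphabet in each position. -/
def IsIso (n : ℕ) (σ : (ℕ → Fin n) → (ℕ → Fin n)) : Prop :=
  ∃ (π : ℕ → Equiv.Perm (Fin n)) (τ : Equiv.Perm ℕ),
    ∀ (a : ℕ → Fin n) (i : ℕ), σ a i = π i (a (τ i))

theorem aux_biUnion {ι α : Type*} (s : Set ι) (f : ι → Set α) (a b : ℕ)
    (hs : s.encard ≤ (a : ℕ∞)) (hf : ∀ i ∈ s, (f i).encard ≤ (b : ℕ∞)) :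
    (⋃ i ∈ s, f i).encard ≤ ((a * b : ℕ) : ℕ∞) := by
  have hfin : s.Finite := Set.finite_of_encard_le_coe hs
  have key : (⋃ i ∈ s, f i).encard ≤ s.encard * b := by
    clear hs
    induction s, hfin using Set.Finite.induction_on with
    | empty => simp
    | @insert i s hi hfin ih =>
      rw [Set.biUnion_insert, Set.encard_insert_of_notMem hi, add_mul, one_mul, add_comm]
      refine (Set.encard_union_le _ _).trans ?_
      exact add_le_add (hf i (Set.mem_insert _ _))
        (ih (fun j hj => hf j (Set.mem_insert_of_mem _ hj)))
  refine key.trans ?_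
  push_cast
  gcongr

theorem hDist_comm' (n : ℕ) (a b : ℕ → Fin n) : hDist n a b = hDist n b a := by
  simp only [hDist, ne_comm]

theorem hDist_tri (n : ℕ) (a b c : ℕ → Fin n) : hDist n a c ≤ hDist n a b + hDist n b c := by
  unfold hDist
  refine le_trans (Set.encard_le_encard ?_) (Set.encard_union_le _ _)
  intro i hi
  simp only [Set.mem_setOf_eq, Set.mem_union] at *
  by_contra! h
  exact hi (h.1.trans h.2)

theorem hDist_self' (n : ℕ) (a : ℕ → Fin n) : hDist n a a = 0 := by
  simp [hDist]

theorem hDist_zero (n : ℕ) (a b : ℕ → Fin n) (h : hDist n a b = 0) : a = b := by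
  funext i
  by_contra hi
  rw [hDist, Set.encard_eq_zero] at h
  have : i ∈ {i | a i ≠ b i} := hi
  rw [h] at this
  exact this

theorem hDist_add (n : ℕ) (x u b : ℕ → Fin n) (h : ∀ i, x i ≠ b i → u i = b i) :
    hDist n x u = hDist n x b + hDist n u b := by
  unfold hDist
  rw [← Set.encard_union_eq]
  · congr 1
    ext i
    simp only [Set.mem_setOf_eq, Set.mem_union]
    have := h i
    grind
  · rw [Set.disjoint_left]
    intro i hi hj
    exact hj (h i hi)

theorem aux_key (n k : ℕ) : ∀ D : ℕ, ∃ M : ℕ, ∀ (b : ℕ → Fin n) (U : Set (ℕ → Fin n)),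
    (∀ u ∈ U, hDist n u b = (k : ℕ∞)) →
    U.encard ≤ (M : ℕ∞) ∨ ∃ (c : ℕ → Fin n) (p : ℕ), 1 ≤ p ∧
      ∀ x, hDist n x b ≤ (D : ℕ∞) →
        ∃ u ∈ U, hDist n u c = (p : ℕ∞) ∧ hDist n x u = hDist n x c + p := by
  induction k with
  | zero =>
    intro D
    refine ⟨1, fun b U hU => Or.inl ?_⟩
    have : U ⊆ {b} := fun u hu => hDist_zero n u b (by simpa using hU u hu)
    simpa using Set.encard_le_encard this
  | succ k ih =>
    intro D
    obtain ⟨M, hM⟩ := ih (D + 1)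
    refine ⟨D * (n * M), fun b U hU => ?_⟩
    by_cases hA : ∀ x, hDist n x b ≤ (D : ℕ∞) → ∃ u ∈ U, ∀ i, x i ≠ b i → u i = b i
    · right
      refine ⟨b, k + 1, by omega, fun x hx => ?_⟩
      obtain ⟨u, hu, h⟩ := hA x hx
      exact ⟨u, hu, hU u hu, by rw [hDist_add n x u b h, hU u hu]⟩
    · push Not at hA
      obtain ⟨x, hx, hxU⟩ := hA
      by_cases hB : ∀ i v, v ≠ b i → {u ∈ U | u i = v}.encard ≤ (M : ℕ∞)
      · left
        have hsub : U ⊆ ⋃ i ∈ {i | x i ≠ b i}, ⋃ v ∈ (Set.univ : Set (Fin n)),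
            {u ∈ U | u i = v ∧ v ≠ b i} := by
          intro u hu
          obtain ⟨i, hi, hui⟩ := hxU u hu
          simp only [Set.mem_iUnion]
          exact ⟨i, hi, u i, trivial, hu, rfl, hui⟩
        refine (Set.encard_le_encard hsub).trans ?_
        refine aux_biUnion _ _ _ _ hx fun i _ => aux_biUnion _ _ _ _ (by simp) fun v _ => ?_
        by_cases hv : v = b i
        · simp [hv]
        · refine le_trans (Set.encard_le_encard ?_) (hB i v hv)
          intro u hu
          exact ⟨hu.1, hu.2.1⟩
      · right
        push Not at hB
        obtain ⟨i, v, hv, hc⟩ := hB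
        have h1 : ∀ u ∈ {u ∈ U | u i = v}, hDist n u (Function.update b i v) = (k : ℕ∞) := by
          intro u hu
          have e : {j | u j ≠ b j} = insert i {j | u j ≠ Function.update b i v j} := by
            ext j
            by_cases hj : j = i
            · subst hj
              simp [hu.2, hv]
            · simp [hj]
          have := hU u hu.1
          rw [hDist, e, Set.encard_insert_of_notMem (by simp [hu.2])] at this
          push_cast at this
          exact (ENat.add_left_injective_of_ne_top (n := 1) (by simp)) this
        rcases hM _ _ h1 with h | ⟨c, p, hp, h⟩
        · exact absurd h (not_le.mpr hc)
        · refine ⟨c, p, hp, fun y hy => ?_⟩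
          obtain ⟨u, hu, h'⟩ := h y (by
            unfold hDist at hy ⊢
            have : {j | y j ≠ Function.update b i v j} ⊆ insert i {j | y j ≠ b j} := by
              intro j hj
              by_cases hji : j = i
              · exact Or.inl hji
              · right
                simpa [hji] using hj
            refine (Set.encard_le_encard this).trans ((Set.encard_insert_le _ _).trans ?_)
            push_cast
            gcongr)
          exact ⟨u, hu.1, h'⟩

/-- Concentric good pairs. -/
def Good (n d : ℕ) (S : Set (ℕ → Fin n)) (u : ℕ → Fin n) (r : ℕ) : Prop :=
  ∀ x ∈ S, hDist n x u + r ≤ (d : ℕ∞)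

def MaxGood (n d : ℕ) (S : Set (ℕ → Fin n)) (u : ℕ → Fin n) (r : ℕ) : Prop :=
  Good n d S u r ∧ ∀ c p, 1 ≤ p → hDist n u c = ((p : ℕ) : ℕ∞) → ¬ Good n d S c (r + p)

theorem Good.le {n d : ℕ} {S : Set (ℕ → Fin n)} {u : ℕ → Fin n} {r : ℕ}
    (hS : S.Nonempty) (h : Good n d S u r) : r ≤ d := by
  obtain ⟨x, hx⟩ := hS
  have := le_trans le_add_self (h x hx)
  exact_mod_cast this

theorem Good.exists_max {n d : ℕ} {S : Set (ℕ → Fin n)} (hS : S.Nonempty) (m : ℕ) :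
    ∀ (u : ℕ → Fin n) (r : ℕ), d - r = m → Good n d S u r →
    ∃ c t, MaxGood n d S c t ∧ ∀ x, hDist n x u ≤ (r : ℕ∞) → hDist n x c ≤ (t : ℕ∞) := by
  induction m using Nat.strong_induction_on with
  | _ m ih =>
    intro u r hm h
    by_cases hmax : MaxGood n d S u r
    · exact ⟨u, r, hmax, fun x hx => hx⟩
    · unfold MaxGood at hmax
      push Not at hmax
      obtain ⟨c, p, hp, hd, hg⟩ := hmax h
      have := Good.le hS hg
      obtain ⟨c', t, h1, h2⟩ := ih (d - (r + p)) (by omega) c (r + p) rfl hg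
      refine ⟨c', t, h1, fun x hx => h2 x ?_⟩
      refine (hDist_tri n x u c).trans ?_
      rw [hd]
      push_cast
      gcongr

theorem aux_bound (n d : ℕ) : ∃ L : ℕ, ∀ (S : Set (ℕ → Fin n)), IsDMaximal n d S → ∀ b ∈ S,
    {i | ∃ u r, MaxGood n d S u r ∧ u i ≠ b i}.encard ≤ (L : ℕ∞) := by
  choose M hM using fun k => aux_key n k d
  obtain ⟨B, hB⟩ : ∃ B, ∀ k ≤ d, M k ≤ B :=
    ⟨∑ k ∈ Finset.range (d + 1), M k, fun k hk =>
      Finset.single_le_sum (f := M) (fun _ _ => Nat.zero_le _) (Finset.mem_range.mpr (by omega))⟩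
  have hI : (Set.Iic d).encard ≤ ((d + 1 : ℕ) : ℕ∞) := by
    rw [← Finset.coe_Iic, Set.encard_coe_eq_coe_finsetCard]
    simp
  refine ⟨((d + 1) * ((d + 1) * B)) * d, fun S hS b hb => ?_⟩
  have hdb : ∀ u r, MaxGood n d S u r → hDist n u b ≤ (d : ℕ∞) := by
    intro u r h
    rw [hDist_comm']
    exact le_trans le_self_add (h.1 b hb)
  have hC : {u | ∃ r, MaxGood n d S u r}.encard ≤ (((d + 1) * ((d + 1) * B) : ℕ) : ℕ∞) := by
    have hsub : {u | ∃ r, MaxGood n d S u r} ⊆ ⋃ r ∈ Set.Iic d, ⋃ k ∈ Set.Iic d,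
        {u | MaxGood n d S u r ∧ hDist n u b = (k : ℕ∞)} := by
      rintro u ⟨r, h⟩
      have h1 := hdb u r h
      have h2 := h.1.le ⟨b, hb⟩
      simp only [Set.mem_iUnion]
      obtain ⟨k, hk⟩ := ENat.ne_top_iff_exists.mp (ne_top_of_le_ne_top (ENat.coe_ne_top d) h1)
      refine ⟨r, h2, k, ?_, h, hk.symm⟩
      rw [← hk] at h1
      exact_mod_cast h1
    refine (Set.encard_le_encard hsub).trans ?_
    refine aux_biUnion _ _ _ _ hI fun r _ => aux_biUnion _ _ _ _ hI fun k hk => ?_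
    rcases hM k b {u | MaxGood n d S u r ∧ hDist n u b = (k : ℕ∞)} (fun u hu => hu.2) with
      h | ⟨c, p, hp, h⟩
    · refine h.trans ?_
      exact_mod_cast hB k hk
    · exfalso
      obtain ⟨u, hu, h1, -⟩ := h b (by simp [hDist_self'])
      refine hu.1.2 c p hp h1 ?_
      intro x hx
      obtain ⟨w, hw, -, h2⟩ := h x (hS.1 x hx b hb)
      have := hw.1.1 x hx
      rw [h2] at this
      push_cast
      rwa [add_comm (r : ℕ∞), ← add_assoc]
  have hsub : {i | ∃ u r, MaxGood n d S u r ∧ u i ≠ b i} ⊆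
      ⋃ u ∈ {u | ∃ r, MaxGood n d S u r}, {i | u i ≠ b i} := by
    rintro i ⟨u, r, h, hi⟩
    simp only [Set.mem_iUnion]
    exact ⟨u, ⟨r, h⟩, hi⟩
  refine (Set.encard_le_encard hsub).trans (aux_biUnion _ _ _ _ hC ?_)
  rintro u ⟨r, h⟩
  exact hdb u r h

theorem aux_perm (F : Set ℕ) (L : ℕ) (hF : F.encard ≤ (L : ℕ∞)) :
    ∃ τ : Equiv.Perm ℕ, ∀ i ∈ F, τ i < L := by
  have hfin : F.Finite := Set.finite_of_encard_le_coe hF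
  have hc : hfin.toFinset.card ≤ L := by
    rw [hfin.encard_eq_coe_toFinset_card] at hF
    exact_mod_cast hF
  let e := hfin.toFinset.equivFin
  let f : F ↪ ℕ := ⟨fun i => (e ⟨i.1, hfin.mem_toFinset.mpr i.2⟩ : ℕ), by
    intro i j h
    have := e.injective (Fin.ext h)
    ext
    simpa using this⟩
  obtain ⟨g, hg⟩ := Cardinal.extend_function_of_lt f
    (by rw [Cardinal.mk_nat]; exact hfin.lt_aleph0) ⟨Equiv.refl ℕ⟩
  refine ⟨g, fun i hi => ?_⟩
  have h := hg ⟨i, hi⟩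
  change g i = _ at h
  rw [h]
  exact lt_of_lt_of_le (e _).2 hc

theorem hDist_iso (n : ℕ) (π : ℕ → Equiv.Perm (Fin n)) (τ : Equiv.Perm ℕ) (a b : ℕ → Fin n) :
    hDist n (fun i => π i (a (τ i))) (fun i => π i (b (τ i))) = hDist n a b := by
  unfold hDist
  rw [← Set.encard_preimage_of_bijective τ.bijective {i | a i ≠ b i}]
  congr 1
  ext i
  simp

theorem stmt4 (n d : ℕ) (hn : 2 ≤ n) :
    ∃ (N : ℕ) (T : Fin N → Set (ℕ → Fin n)),
      (∀ j, IsDMaximal n d (T j)) ∧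
      ∀ S : Set (ℕ → Fin n), IsDMaximal n d S →
        ∃ (j : Fin N) (σ : (ℕ → Fin n) → (ℕ → Fin n)), IsIso n σ ∧ S = σ '' T j := by
  haveI : NeZero n := ⟨by omega⟩
  obtain ⟨L, hL⟩ := aux_bound n d
  let W : Set (ℕ → Fin n) := {v | ∀ j, L ≤ j → v j = 0}
  have hW : W.Finite := by
    refine (Set.finite_range
      (fun (g : Fin L → Fin n) (j : ℕ) => if h : j < L then g ⟨j, h⟩ else 0)).subset ?_
    intro v hv
    refine ⟨fun j => v j, ?_⟩
    funext j
    by_cases h : j < L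
    · simp [h]
    · simp [h, hv j (not_lt.mp h)]
  let G : Set ((ℕ → Fin n) × ℕ) → Set (ℕ → Fin n) :=
    fun P => {x | ∃ q ∈ P, hDist n x q.1 ≤ (q.2 : ℕ∞)}
  let Q : Set (Set (ℕ → Fin n)) := {T | IsDMaximal n d T} ∩ G '' (𝒫 (W ×ˢ Set.Iic d))
  have hQ : Q.Finite :=
    (((hW.prod (Set.finite_Iic d)).finite_subsets).image G).subset Set.inter_subset_right
  refine ⟨hQ.toFinset.card, fun j => (hQ.toFinset.equivFin.symm j).1, fun j => ?_, fun S hS => ?_⟩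
  · exact (hQ.mem_toFinset.mp (hQ.toFinset.equivFin.symm j).2).1
  · obtain ⟨b, hb, -⟩ := hS.2.1
    obtain ⟨τ, hτ⟩ := aux_perm _ L (hL S hS b hb)
    let π : ℕ → Equiv.Perm (Fin n) := fun i => Equiv.swap (b i) 0
    let σ : (ℕ → Fin n) → (ℕ → Fin n) := fun a i => π i (a (τ i))
    have hd : ∀ a c, hDist n (σ a) (σ c) = hDist n a c := hDist_iso n π τ
    have hsurj : Function.Surjective σ := by
      intro u
      refine ⟨fun j => (π (τ.symm j)).symm (u (τ.symm j)), ?_⟩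
      funext i
      simp [σ]
    have hT : IsDMaximal n d (σ ⁻¹' S) := by
      refine ⟨fun a ha c hc => ?_, ?_, fun x hx => ?_⟩
      · rw [← hd]
        exact hS.1 _ ha _ hc
      · obtain ⟨a, ha, c, hc, h⟩ := hS.2.1
        obtain ⟨a, rfl⟩ := hsurj a
        obtain ⟨c, rfl⟩ := hsurj c
        exact ⟨a, ha, c, hc, by rw [← hd, h]⟩
      · refine hS.2.2 _ fun s hs => ?_
        obtain ⟨s, rfl⟩ := hsurj s
        rw [hd]
        exact hx s hs
    have hTQ : σ ⁻¹' S ∈ Q := by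
      refine ⟨hT, {q | MaxGood n d S (σ q.1) q.2}, ?_, ?_⟩
      · rintro ⟨v, r⟩ h
        refine ⟨fun j hj => ?_, h.1.le ⟨b, hb⟩⟩
        by_contra hv
        have := hτ (τ.symm j) ⟨σ v, r, h, ?_⟩
        · simp at this
          omega
        · intro h0
          simp only [σ, π, Equiv.apply_symm_apply] at h0
          apply hv
          have h1 := congrArg (Equiv.swap (b (τ.symm j)) 0) h0
          simpa using h1
      · ext x
        constructor
        · rintro ⟨⟨v, r⟩, h, hx⟩
          refine hS.2.2 _ fun s hs => ?_
          have h1 := h.1 s hs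
          rw [hDist_comm']
          refine (hDist_tri n s (σ v) (σ x)).trans (le_trans ?_ h1)
          rw [hDist_comm' n (σ v), hd]
          gcongr
        · intro hx
          have hg : Good n d S (σ x) 0 := fun y hy => by
            simpa using hS.1 y hy _ hx
          obtain ⟨c, t, h1, h2⟩ := Good.exists_max ⟨b, hb⟩ _ _ _ rfl hg
          obtain ⟨c, rfl⟩ := hsurj c
          refine ⟨(c, t), h1, ?_⟩
          rw [← hd]
          exact h2 _ (by simp [hDist_self'])
    refine ⟨hQ.toFinset.equivFin ⟨σ ⁻¹' S, hQ.mem_toFinset.mpr hTQ⟩, σ,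
      ⟨π, τ, fun _ _ => rfl⟩, ?_⟩
    simp only [Equiv.symm_apply_apply]
    exact (Set.image_preimage_eq S hsurj).symm
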